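/- Let ε > 0 and let (f_n) be a family of Boolean functions f_n : {±1}^n → {±1} that is high-degree, i.e., for every fixed k the Fourier weight W^{≤k}(f_n) is negligible. Let f̄_n denote the N-extension of f_n for N = n^{1+ε}. Then the cross-predictability CP(orb(f̄_n), U^N), where orb(f̄_n) is the uniform distribution on the orbit of f̄_n under coordinate permutations and U^N is uniform on {±1}^N, is negligible. -/

import Mathlib

open MeasureTheory ProbabilityTheory Filter Finset Asymptotics
open scoped NNReal ENNReal

noncomputable section

/-- The ±1 value encoded by a Boolean bit. -/
def bsign (b : Bool) : ℝ := if b then 1 else -1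

/-- Expectation over a uniformly random point of the Boolean cube `{±1}^n`. -/
def bExp (n : ℕ) (g : (Fin n → Bool) → ℝ) : ℝ :=
  (∑ x : Fin n → Bool, g x) / 2 ^ n

/-- A function on the Boolean cube is Boolean(-valued) if it takes values in `{±1}`. -/
def IsBooleanFn {n : ℕ} (f : (Fin n → Bool) → ℝ) : Prop := ∀ x, f x = 1 ∨ f x = -1

/-- Initialization distribution: the weights `w : ℝⁿ` and the bias `b` are
iid `N(0, 1/n)` Gaussians. -/
def initMeasure (n : ℕ) : Measure ((Fin n → ℝ) × ℝ) :=
  (Measure.pi fun _ : Fin n => gaussianReal 0 (n : ℝ≥0)⁻¹).prod (gaussianReal 0 (n : ℝ≥0)⁻¹)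

/-- Initial alignment `INAL(f, σ) = E_{w,b} [ (E_x [f(x) σ(wᵀx + b)])² ]`. -/
def INAL (n : ℕ) (f : (Fin n → Bool) → ℝ) (σ : ℝ → ℝ) : ℝ :=
  ∫ θ : (Fin n → ℝ) × ℝ,
    (bExp n fun x => f x * σ (∑ i, θ.1 i * bsign (x i) + θ.2)) ^ 2 ∂ initMeasure n

/-- The `v`-Gaussian smoothing `Σ_v(t) = E_{Y ∼ N(0,v)} [σ(Y + t)]`. -/
def gsmooth (σ : ℝ → ℝ) (v : ℝ) (t : ℝ) : ℝ :=
  ∫ y, σ (y + t) ∂ gaussianReal 0 v.toNNReal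

/-- `σ` is polynomially bounded: `|σ(x)| ≤ C |x|^c + C` for some `C, c > 0`. -/
def PolyBounded (σ : ℝ → ℝ) : Prop :=
  ∃ C : ℝ, 0 < C ∧ ∃ c : ℕ, 0 < c ∧ ∀ x : ℝ, |σ x| ≤ C * |x| ^ c + C

/-- `σ` is expressive: measurable, polynomially bounded, and its Gaussian smoothing has no
two consecutive vanishing derivatives at `0`. -/
def Expressive (σ : ℝ → ℝ) : Prop :=
  Measurable σ ∧ PolyBounded σ ∧
    ∀ m : ℕ, iteratedDeriv m (gsmooth σ 1) 0 ≠ 0 ∨ iteratedDeriv (m + 1) (gsmooth σ 1) 0 ≠ 0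

/-- A nonnegative sequence is negligible if it decays faster than any inverse polynomial. -/
def Negligible (g : ℕ → ℝ) : Prop :=
  ∀ c : ℕ, Tendsto (fun n : ℕ => (n : ℝ) ^ c * g n) atTop (nhds 0)

/-- Fourier character `M_S(x) = ∏_{i ∈ S} x_i`. -/
def chi {n : ℕ} (S : Finset (Fin n)) (x : Fin n → Bool) : ℝ := ∏ i ∈ S, bsign (x i)

/-- Fourier coefficient `f̂(S) = E_x [f(x) M_S(x)]`. -/
def fourierCoef (n : ℕ) (f : (Fin n → Bool) → ℝ) (S : Finset (Fin n)) : ℝ :=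
  bExp n fun x => f x * chi S x

/-- Fourier weight up to degree `k`: `W^{≤k}(f)`. -/
def weightLE (n k : ℕ) (f : (Fin n → Bool) → ℝ) : ℝ :=
  ∑ S ∈ Finset.univ.filter (fun S : Finset (Fin n) => S.card ≤ k), fourierCoef n f S ^ 2

/-- Fourier weight strictly below degree `k`: `W^{<k}(f)`. -/
def weightLT (n k : ℕ) (f : (Fin n → Bool) → ℝ) : ℝ :=
  ∑ S ∈ Finset.univ.filter (fun S : Finset (Fin n) => S.card < k), fourierCoef n f S ^ 2

/-- The monomial `M_k(x) = ∏_{i=1}^k x_i`, viewed as a function on `{±1}^n`. -/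
def monomial (n k : ℕ) : (Fin n → Bool) → ℝ :=
  fun x => ∏ i ∈ Finset.univ.filter (fun i : Fin n => (i : ℕ) < k), bsign (x i)

/-- The `N`-extension of `f : {±1}^n → ℝ` (for `n ≤ N`): ignore the last `N - n` coordinates. -/
def extendFn (n N : ℕ) (f : (Fin n → Bool) → ℝ) : (Fin N → Bool) → ℝ :=
  fun x => f fun i => if h : (i : ℕ) < N then x ⟨i, h⟩ else false

/-- Cross-predictability of (the uniform distribution on) the orbit of `f` under coordinate
permutations, with uniform inputs: `CP(orb(f), U^N)`. -/
def orbitCP (N : ℕ) (f : (Fin N → Bool) → ℝ) : ℝ :=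
  (∑ π : Equiv.Perm (Fin N), ∑ π' : Equiv.Perm (Fin N),
      (bExp N fun x => f (fun i => x (π i)) * f (fun i => x (π' i))) ^ 2) /
    (Fintype.card (Equiv.Perm (Fin N))) ^ 2

/-- `N = n^{1+ε}` (rounded up). -/
def Ndim (ε : ℝ) (n : ℕ) : ℕ := ⌈(n : ℝ) ^ (1 + ε)⌉₊

lemma chi_eq_univ {n : ℕ} (S : Finset (Fin n)) (x : Fin n → Bool) :
    chi S x = ∏ i, (if i ∈ S then bsign (x i) else 1) := by
  simp [chi, Finset.prod_ite_mem]

lemma chi_orth {N : ℕ} (S T : Finset (Fin N)) :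
    bExp N (fun x => chi S x * chi T x) = if S = T then 1 else 0 := by
  unfold bExp
  have h1 : ∑ x : Fin N → Bool, chi S x * chi T x
      = ∏ i, ∑ b : Bool, ((if i ∈ S then bsign b else 1) * (if i ∈ T then bsign b else 1)) := by
    rw [Finset.prod_univ_sum, Fintype.piFinset_univ]
    refine Finset.sum_congr rfl fun x _ => ?_
    rw [chi_eq_univ, chi_eq_univ, ← Finset.prod_mul_distrib]
  rw [h1]
  split_ifs with h
  · subst h
    have : ∀ i ∈ (Finset.univ : Finset (Fin N)), ∑ b : Bool, ((if i ∈ S then bsign b else 1) * (if i ∈ S then bsign b else 1)) = 2 := by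
      intro i _
      by_cases hi : i ∈ S <;> simp [hi, bsign] <;> norm_num
    rw [Finset.prod_congr rfl this]
    simp
  · have : ∃ i, ¬ (i ∈ S ↔ i ∈ T) := by
      by_contra hc
      push Not at hc
      exact h (Finset.ext hc)
    obtain ⟨i, hi⟩ := this
    rw [Finset.prod_eq_zero (Finset.mem_univ i), zero_div]
    by_cases h1 : i ∈ S <;> by_cases h2 : i ∈ T <;> simp_all [bsign]

lemma sum_chi {n : ℕ} (x y : Fin n → Bool) :
    ∑ T : Finset (Fin n), chi T x * chi T y = if x = y then 2 ^ n else 0 := by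
  have h1 : ∑ T : Finset (Fin n), chi T x * chi T y = ∏ i, (1 + bsign (x i) * bsign (y i)) := by
    rw [Finset.prod_one_add, Finset.powerset_univ]
    refine Finset.sum_congr rfl fun T _ => ?_
    rw [chi, chi, Finset.prod_mul_distrib]
  rw [h1]
  split_ifs with h
  · subst h
    have : ∀ i ∈ (Finset.univ : Finset (Fin n)), (1 + bsign (x i) * bsign (x i)) = 2 := by
      intro i _
      cases x i <;> simp [bsign] <;> norm_num
    rw [Finset.prod_congr rfl this]
    simp
  · obtain ⟨i, hi⟩ := Function.ne_iff.mp h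
    rw [Finset.prod_eq_zero (Finset.mem_univ i)]
    cases hx : x i <;> cases hy : y i <;> simp_all [bsign]

lemma fourier_inv {n : ℕ} (f : (Fin n → Bool) → ℝ) (x : Fin n → Bool) :
    f x = ∑ T, fourierCoef n f T * chi T x := by
  unfold fourierCoef bExp
  simp_rw [div_mul_eq_mul_div, Finset.sum_mul]
  rw [← Finset.sum_div, Finset.sum_comm]
  simp_rw [mul_assoc, ← Finset.mul_sum, sum_chi]
  simp

lemma chi_map {n N : ℕ} (e : Fin n ↪ Fin N) (T : Finset (Fin n)) (x : Fin N → Bool) :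
    chi T (fun i => x (e i)) = chi (T.map e) x := by
  simp [chi]

lemma corr_eq {n N : ℕ} (f : (Fin n → Bool) → ℝ) (e e' : Fin n ↪ Fin N) :
    bExp N (fun x => f (fun i => x (e i)) * f (fun i => x (e' i)))
      = ∑ p ∈ (Finset.univ : Finset (Finset (Fin n) × Finset (Fin n))).filter
          (fun p => p.1.map e = p.2.map e'), fourierCoef n f p.1 * fourierCoef n f p.2 := by
  have h1 : ∀ x : Fin N → Bool, f (fun i => x (e i)) * f (fun i => x (e' i))
      = ∑ p : Finset (Fin n) × Finset (Fin n), fourierCoef n f p.1 * fourierCoef n f p.2 *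
        (chi (p.1.map e) x * chi (p.2.map e') x) := by
    intro x
    rw [fourier_inv f (fun i => x (e i)), fourier_inv f (fun i => x (e' i)),
      Finset.sum_mul_sum, Fintype.sum_prod_type]
    refine Finset.sum_congr rfl fun S _ => Finset.sum_congr rfl fun T _ => ?_
    rw [chi_map, chi_map]; ring
  unfold bExp
  simp_rw [h1]
  rw [Finset.sum_comm, Finset.sum_div, Finset.sum_filter]
  refine Finset.sum_congr rfl fun p _ => ?_
  rw [← Finset.mul_sum, mul_div_assoc]
  have := chi_orth (p.1.map e) (p.2.map e')
  unfold bExp at this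
  rw [this]
  simp

lemma parseval {n : ℕ} (f : (Fin n → Bool) → ℝ) (hf : IsBooleanFn f) :
    ∑ T, fourierCoef n f T ^ 2 = 1 := by
  have h := corr_eq f (Function.Embedding.refl _) (Function.Embedding.refl _)
  simp only [Function.Embedding.refl_apply, Finset.map_refl] at h
  rw [Finset.sum_filter, Fintype.sum_prod_type] at h
  simp only [Finset.sum_ite_eq, Finset.mem_univ, if_true] at h
  simp_rw [sq]
  rw [← h]
  unfold bExp
  have : ∀ x ∈ (Finset.univ : Finset (Fin n → Bool)), f x * f x = 1 := by
    intro x _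
    rcases hf x with h | h <;> rw [h] <;> norm_num
  rw [Finset.sum_congr rfl this]
  simp

lemma corr_sq_le {n N : ℕ} (f : (Fin n → Bool) → ℝ) (hf : IsBooleanFn f) (e e' : Fin n ↪ Fin N) :
    (bExp N (fun x => f (fun i => x (e i)) * f (fun i => x (e' i)))) ^ 2
      ≤ ∑ T, fourierCoef n f T ^ 2 *
        (if ∀ i ∈ T, e i ∈ Finset.univ.map e' then 1 else 0) := by
  rw [corr_eq]
  refine (Finset.sum_mul_sq_le_sq_mul_sq _ _ _).trans ?_
  have hb : ∑ p ∈ (Finset.univ : Finset (Finset (Fin n) × Finset (Fin n))).filter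
          (fun p => p.1.map e = p.2.map e'), fourierCoef n f p.2 ^ 2 ≤ 1 := by
    rw [← parseval f hf]
    rw [← Finset.sum_image (f := fun T => fourierCoef n f T ^ 2) (g := Prod.snd)]
    · exact Finset.sum_le_univ_sum_of_nonneg fun _ => sq_nonneg _
    · rintro ⟨a, b⟩ h ⟨a', b'⟩ h' (hh : b = b')
      subst hh
      simp only [Finset.coe_filter, Finset.mem_univ, true_and, Set.mem_ofPred_eq] at h h'
      rw [← h'] at h
      rw [Finset.map_injective e h]
  have ha : ∑ p ∈ (Finset.univ : Finset (Finset (Fin n) × Finset (Fin n))).filter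
          (fun p => p.1.map e = p.2.map e'), fourierCoef n f p.1 ^ 2 ≤ ∑ T, fourierCoef n f T ^ 2 *
        (if ∀ i ∈ T, e i ∈ Finset.univ.map e' then 1 else 0) := by
    rw [← Finset.sum_image (f := fun T => fourierCoef n f T ^ 2) (g := Prod.fst)]
    · simp only [mul_ite, mul_one, mul_zero]
      rw [← Finset.sum_filter]
      refine Finset.sum_le_sum_of_subset_of_nonneg ?_ fun _ _ _ => sq_nonneg _
      intro T hT
      simp only [Finset.mem_image, Finset.mem_filter, Finset.mem_univ, true_and] at hT ⊢
      obtain ⟨⟨a, b⟩, h, rfl⟩ := hT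
      intro i hi
      have : e i ∈ b.map e' := by
        rw [← h]; exact Finset.mem_map_of_mem e hi
      exact Finset.map_subset_map.mpr (Finset.subset_univ b) this
    · rintro ⟨a, b⟩ h ⟨a', b'⟩ h' (hh : a = a')
      subst hh
      simp only [Finset.coe_filter, Finset.mem_univ, true_and, Set.mem_ofPred_eq] at h h'
      rw [h'] at h
      rw [Finset.map_injective e' h]
  calc _ ≤ _ * (1 : ℝ) := mul_le_mul_of_nonneg_left hb (Finset.sum_nonneg fun _ _ => sq_nonneg _)
    _ ≤ _ := by rw [mul_one]; exact ha

/-- permutations mapping S into A -/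
def permInto {N : ℕ} (A S : Finset (Fin N)) : Finset (Equiv.Perm (Fin N)) :=
  Finset.univ.filter fun π => ∀ i ∈ S, π i ∈ A

lemma permInto_insert {N : ℕ} (A S : Finset (Fin N)) (a b : Fin N) (ha : a ∉ S) (hb : b ∉ S) :
    (permInto A (insert a S)).card = (permInto A (insert b S)).card := by
  refine Finset.card_bij' (fun π _ => π * Equiv.swap a b) (fun π _ => π * Equiv.swap a b) ?_ ?_ ?_ ?_
  · intro π hπ
    simp only [permInto, Finset.mem_filter, Finset.mem_univ, true_and, Finset.mem_insert,
      forall_eq_or_imp, Equiv.Perm.mul_apply, Equiv.swap_apply_right] at hπ ⊢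
    refine ⟨hπ.1, fun i hi => ?_⟩
    rw [Equiv.swap_apply_of_ne_of_ne (by rintro rfl; exact ha hi) (by rintro rfl; exact hb hi)]
    exact hπ.2 i hi
  · intro π hπ
    simp only [permInto, Finset.mem_filter, Finset.mem_univ, true_and, Finset.mem_insert,
      forall_eq_or_imp, Equiv.Perm.mul_apply, Equiv.swap_apply_left] at hπ ⊢
    refine ⟨hπ.1, fun i hi => ?_⟩
    rw [Equiv.swap_apply_of_ne_of_ne (by rintro rfl; exact ha hi) (by rintro rfl; exact hb hi)]
    exact hπ.2 i hi
  · intro π _; simp [mul_assoc]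
  · intro π _; simp [mul_assoc]

lemma permInto_step {N : ℕ} (A S : Finset (Fin N)) (a : Fin N) (ha : a ∉ S) :
    (permInto A (insert a S)).card * (N - S.card) = (permInto A S).card * (A.card - S.card) := by
  have h1 : ∑ b ∈ Sᶜ, (permInto A (insert b S)).card
      = (permInto A (insert a S)).card * (N - S.card) := by
    rw [Finset.sum_congr rfl (g := fun _ => (permInto A (insert a S)).card)]
    · simp [Finset.card_compl, mul_comm]
    · intro b hb
      exact permInto_insert A S b a (by simpa using hb) ha
  rw [← h1]
  have h2 : ∀ b ∈ Sᶜ, (permInto A (insert b S)).card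
      = ∑ π ∈ permInto A S, if π b ∈ A then 1 else 0 := by
    intro b _
    rw [← Finset.card_filter]
    congr 1
    ext π
    simp [permInto, and_comm]
  rw [Finset.sum_congr rfl h2, Finset.sum_comm, Finset.sum_const_nat]
  intro π hπ
  simp only [permInto, Finset.mem_filter, Finset.mem_univ, true_and] at hπ
  rw [← Finset.card_filter]
  have : (Sᶜ.filter fun b => π b ∈ A).map π.toEmbedding = A \ S.map π.toEmbedding := by
    ext c
    simp only [Finset.mem_map, Finset.mem_filter, Finset.mem_compl, Finset.mem_sdiff]
    constructor
    · rintro ⟨b, ⟨h1, h2⟩, rfl⟩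
      refine ⟨h2, ?_⟩
      rintro ⟨d, hd, h⟩
      exact h1 (π.injective h ▸ hd)
    · rintro ⟨h1, h2⟩
      refine ⟨π.symm c, ⟨fun h => h2 ⟨_, h, by simp⟩, by simpa using h1⟩, by simp⟩
  rw [← Finset.card_map π.toEmbedding, this, Finset.card_sdiff_of_subset, Finset.card_map]
  intro c hc
  simp only [Finset.mem_map] at hc
  obtain ⟨d, hd, rfl⟩ := hc
  exact hπ d hd

lemma permInto_card {N : ℕ} (A S : Finset (Fin N)) :
    ((permInto A S).card : ℝ) ≤ ((A.card : ℝ) / N) ^ S.card * (Fintype.card (Equiv.Perm (Fin N))) := by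
  induction S using Finset.induction_on with
  | empty => simp [permInto]
  | insert a S ha ih =>
    have hstep := permInto_step A S a ha
    have hSN : S.card < N := by
      have := Finset.card_le_univ (insert a S)
      rw [Finset.card_insert_of_notMem ha] at this
      simpa using this
    have hAN : A.card ≤ N := by simpa using Finset.card_le_univ A
    rw [Finset.card_insert_of_notMem ha]
    have hN : (0 : ℝ) < N := by exact_mod_cast (by omega : 0 < N)
    have key : ((permInto A (insert a S)).card : ℝ) ≤ (A.card : ℝ) / N * (permInto A S).card := by
      rw [div_mul_eq_mul_div, le_div_iff₀ hN]
      by_cases hc : S.card ≤ A.card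
      · have hs : ((permInto A (insert a S)).card : ℝ) * (N - S.card) = (permInto A S).card * (A.card - S.card) := by
          rw [← Nat.cast_sub hSN.le, ← Nat.cast_sub hc]; exact_mod_cast hstep
        have hmono : ((permInto A (insert a S)).card : ℝ) ≤ (permInto A S).card := by
          refine Nat.cast_le.mpr (Finset.card_le_card ?_)
          intro π hπ
          simp only [permInto, Finset.mem_filter, Finset.mem_univ, true_and] at hπ ⊢
          exact fun i hi => hπ i (Finset.mem_insert_of_mem hi)
        nlinarith [mul_le_mul_of_nonneg_right hmono (Nat.cast_nonneg (α := ℝ) S.card)]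
      · have : (permInto A (insert a S)).card = 0 := by
          rw [Nat.sub_eq_zero_of_le (by omega : A.card ≤ S.card), mul_zero] at hstep
          rcases Nat.mul_eq_zero.mp hstep with h | h
          · exact h
          · omega
        rw [this]; simp; positivity
    refine key.trans ?_
    rw [pow_succ']
    rw [mul_assoc]
    exact mul_le_mul_of_nonneg_left ih (by positivity)

lemma orbitCP_le {n N : ℕ} (hnN : n ≤ N) (f : (Fin n → Bool) → ℝ) (hf : IsBooleanFn f) :
    orbitCP N (extendFn n N f) ≤ ∑ T, fourierCoef n f T ^ 2 * ((n : ℝ) / N) ^ T.card := by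
  have hpos : (0 : ℝ) < (Fintype.card (Equiv.Perm (Fin N))) := by exact_mod_cast Fintype.card_pos
  unfold orbitCP
  rw [div_le_iff₀ (by positivity)]
  let e : Equiv.Perm (Fin N) → (Fin n ↪ Fin N) := fun π => (Fin.castLEEmb hnN).trans π.toEmbedding
  have h1 : ∀ π : Equiv.Perm (Fin N), ∀ x : Fin N → Bool,
      extendFn n N f (fun i => x (π i)) = f (fun i => x (e π i)) := by
    intro π x
    unfold extendFn
    congr 1
    funext i
    have : (i : ℕ) < N := lt_of_lt_of_le i.2 hnN
    simp only [this, dite_true]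
    rfl
  simp_rw [h1]
  calc _ ≤ ∑ π : Equiv.Perm (Fin N), ∑ π' : Equiv.Perm (Fin N), ∑ T, fourierCoef n f T ^ 2 *
        (if ∀ i ∈ T, e π i ∈ Finset.univ.map (e π') then (1 : ℝ) else 0) :=
        Finset.sum_le_sum fun π _ => Finset.sum_le_sum fun π' _ => corr_sq_le f hf _ _
    _ = ∑ T, ∑ π' : Equiv.Perm (Fin N), fourierCoef n f T ^ 2 *
        ((permInto (Finset.univ.map (e π')) (T.map (Fin.castLEEmb hnN))).card : ℝ) := by
        rw [Finset.sum_comm]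
        rw [Finset.sum_congr rfl fun π' _ => Finset.sum_comm, Finset.sum_comm]
        refine Finset.sum_congr rfl fun T _ => ?_
        refine Finset.sum_congr rfl fun π' _ => ?_
        rw [← Finset.mul_sum]
        congr 1
        rw [permInto, Finset.card_filter]
        push_cast
        refine Finset.sum_congr rfl fun π _ => ?_
        simp [e]
    _ ≤ ∑ T, ∑ π' : Equiv.Perm (Fin N), fourierCoef n f T ^ 2 *
        (((n : ℝ) / N) ^ T.card * (Fintype.card (Equiv.Perm (Fin N)))) := by
        refine Finset.sum_le_sum fun T _ => Finset.sum_le_sum fun π' _ => ?_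
        refine mul_le_mul_of_nonneg_left ?_ (sq_nonneg _)
        have := permInto_card (Finset.univ.map (e π')) (T.map (Fin.castLEEmb hnN))
        simpa using this
    _ = _ := by
        rw [Finset.sum_mul]
        refine Finset.sum_congr rfl fun T _ => ?_
        rw [Finset.sum_const, Finset.card_univ, nsmul_eq_mul]
        ring

lemma orbitCP_le' {n N : ℕ} (k : ℕ) (hnN : n ≤ N) (f : (Fin n → Bool) → ℝ) (hf : IsBooleanFn f) :
    orbitCP N (extendFn n N f) ≤ weightLE n k f + ((n : ℝ) / N) ^ k := by
  refine (orbitCP_le hnN f hf).trans ?_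
  have hr0 : (0 : ℝ) ≤ (n : ℝ) / N := by positivity
  have hr1 : (n : ℝ) / N ≤ 1 := div_le_one_of_le₀ (by exact_mod_cast hnN) (by positivity)
  rw [← one_mul (((n : ℝ) / N) ^ k), ← parseval f hf, weightLE, Finset.sum_mul, Finset.sum_filter,
    ← Finset.sum_add_distrib]
  refine Finset.sum_le_sum fun T _ => ?_
  have hsq := sq_nonneg (fourierCoef n f T)
  split_ifs with h
  · have := mul_le_mul_of_nonneg_left (pow_le_one₀ (n := T.card) hr0 hr1) hsq
    have h2 : 0 ≤ fourierCoef n f T ^ 2 * ((n : ℝ) / N) ^ k := by positivity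
    linarith
  · rw [zero_add]
    exact mul_le_mul_of_nonneg_left (pow_le_pow_of_le_one hr0 hr1 (by omega)) hsq

/-- If the Boolean family `(f_n)` is high-degree, then for every `ε > 0`,
with `N = n^{1+ε}`, the cross-predictability of the orbit of the `N`-extension of `f_n`
is negligible. -/
theorem high_degree_implies_orbitCP_negligible
    (ε : ℝ) (hε : 0 < ε)
    (f : ∀ n : ℕ, (Fin n → Bool) → ℝ) (hf : ∀ n, IsBooleanFn (f n))
    (hhd : ∀ k : ℕ, Negligible fun n => weightLE n k (f n)) :
    Negligible fun n => orbitCP (Ndim ε n) (extendFn n (Ndim ε n) (f n)) := by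
  intro c
  obtain ⟨k, hk⟩ := exists_nat_ge (((c : ℝ) + 1) / ε)
  have hk' : (c : ℝ) + 1 ≤ k * ε := by rwa [div_le_iff₀ hε] at hk
  have hlim : Tendsto (fun n : ℕ => (n : ℝ) ^ c * weightLE n k (f n) + (n : ℝ)⁻¹) atTop (nhds 0) := by
    have := (hhd k c).add (tendsto_inv_atTop_nhds_zero_nat (𝕜 := ℝ))
    simpa using this
  refine tendsto_of_tendsto_of_tendsto_of_le_of_le' tendsto_const_nhds hlim ?_ ?_
  · refine Eventually.of_forall fun n => ?_
    unfold orbitCP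
    positivity
  · filter_upwards [eventually_ge_atTop 1] with n hn
    have hn1 : (1 : ℝ) ≤ n := by exact_mod_cast hn
    have hn0 : (0 : ℝ) < n := by linarith
    have hN : (n : ℝ) ^ (1 + ε) ≤ (Ndim ε n : ℝ) := Nat.le_ceil _
    have hnN : n ≤ Ndim ε n := by
      have : (n : ℝ) ^ (1 : ℝ) ≤ (n : ℝ) ^ (1 + ε) := Real.rpow_le_rpow_of_exponent_le hn1 (by linarith)
      rw [Real.rpow_one] at this
      exact_mod_cast this.trans hN
    have hb := orbitCP_le' k hnN (f n) (hf n)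
    have hr : (n : ℝ) / (Ndim ε n) ≤ (n : ℝ) ^ (-ε) := by
      rw [div_le_iff₀ (by exact_mod_cast (by omega : 0 < Ndim ε n))]
      calc (n : ℝ) = (n : ℝ) ^ (-ε) * (n : ℝ) ^ (1 + ε) := by
            rw [← Real.rpow_add hn0]; simp
        _ ≤ _ := by gcongr
    have hrk : (n : ℝ) ^ c * ((n : ℝ) / (Ndim ε n)) ^ k ≤ (n : ℝ)⁻¹ := by
      calc _ ≤ (n : ℝ) ^ c * ((n : ℝ) ^ (-ε)) ^ k := by gcongr
        _ = (n : ℝ) ^ ((c : ℝ) + (-ε) * k) := by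
            rw [Real.rpow_add hn0, Real.rpow_natCast, Real.rpow_mul hn0.le, Real.rpow_natCast]
        _ ≤ (n : ℝ) ^ (-1 : ℝ) := Real.rpow_le_rpow_of_exponent_le hn1 (by linarith)
        _ = _ := Real.rpow_neg_one _
    calc _ ≤ (n : ℝ) ^ c * (weightLE n k (f n) + ((n : ℝ) / (Ndim ε n)) ^ k) := by gcongr
      _ ≤ _ := by rw [mul_add]; linarith
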